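/- arXiv:2109.02709 — 2 statements merged into one kernel-verified Lean document; each statement's English description precedes it below -/
import Mathlib

section
/- Let φ be a Bernstein function with φ(0) = 0 and φ(∞) = ∞, let Ψ be its inverse, and let (μ_t)_{t>0} be the family of marginal laws of the subordinator associated with φ. Then for every t > 0 and every p > −1 such that ∫₀^∞ e^{−t x} Ψ(x)^p dx < ∞, one has E[ξ_t^{−p}] = ∫_{(0,∞)} x^{−p} μ_t(dx) = (t/Γ(p+1)) ∫₀^∞ e^{−t x} Ψ(x)^p dx. -/
open MeasureTheory Set Filter

/-- A Bernstein function on `(0,∞)`: a nonnegative smooth function whose derivatives satisfy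
`(−1)^{n−1} f^{(n)} ≥ 0` on `(0,∞)` for every `n ≥ 1`. -/
def IsBernsteinFn (f : ℝ → ℝ) : Prop :=
  (∀ x : ℝ, 0 < x → 0 ≤ f x) ∧ ContDiffOn ℝ (⊤ : ℕ∞) f (Ioi 0) ∧
    ∀ n : ℕ, 1 ≤ n → ∀ x : ℝ, 0 < x → 0 ≤ (-1 : ℝ) ^ (n - 1) * iteratedDeriv n f x

/-- The exponential law of rate `r`, as a measure carried by `(0,∞)`. -/
noncomputable def expLaw (r : ℝ) : Measure ℝ :=
  (volume.restrict (Ioi 0)).withDensity fun x => ENNReal.ofReal (r * Real.exp (-r * x))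

lemma measurable_expLaw_density (r : ℝ) :
    Measurable fun x : ℝ => ENNReal.ofReal (r * Real.exp (-r * x)) := by
  fun_prop

lemma expLaw_Ioi {r : ℝ} (hr : 0 < r) {a : ℝ} (ha : 0 ≤ a) :
    expLaw r (Ioi a) = ENNReal.ofReal (Real.exp (-r * a)) := by
  have hr' : -r < 0 := by linarith
  rw [expLaw, withDensity_apply _ measurableSet_Ioi, Measure.restrict_restrict measurableSet_Ioi,
    inter_eq_self_of_subset_left (Ioi_subset_Ioi ha),
    ← ofReal_integral_eq_lintegral_ofReal ((integrableOn_exp_mul_Ioi hr' a).const_mul r)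
      (ae_of_all _ fun x => by positivity),
    integral_const_mul, integral_exp_mul_Ioi hr' a]
  congr 1
  field_simp

lemma ae_pos_expLaw (r : ℝ) : ∀ᵐ x ∂(expLaw r), 0 < x :=
  (withDensity_absolutelyContinuous _ _).ae_le (ae_restrict_mem measurableSet_Ioi)

lemma isProbabilityMeasure_expLaw {r : ℝ} (hr : 0 < r) : IsProbabilityMeasure (expLaw r) := by
  constructor
  rw [← measure_congr (eventuallyEq_univ.2 (ae_pos_expLaw r) : Ioi (0 : ℝ) =ᵐ[expLaw r] univ),
    expLaw_Ioi hr le_rfl]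
  simp

lemma lintegral_expLaw (r : ℝ) {f : ℝ → ENNReal}
    (hf : AEMeasurable f (volume.restrict (Ioi 0))) :
    ∫⁻ x, f x ∂(expLaw r) =
      ∫⁻ x in Ioi 0, ENNReal.ofReal (r * Real.exp (-r * x)) * f x := by
  rw [expLaw, lintegral_withDensity_eq_lintegral_mul₀
    (measurable_expLaw_density r).aemeasurable hf]
  rfl

/-- The moments of the standard exponential law are the values of the Gamma function. -/
lemma lintegral_rpow_expLaw_one {p : ℝ} (hp : -1 < p) :
    ∫⁻ x, ENNReal.ofReal (x ^ p) ∂(expLaw 1) = ENNReal.ofReal (Real.Gamma (p + 1)) := by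
  have hp' : 0 < p + 1 := by linarith
  rw [lintegral_expLaw 1 (by fun_prop), Real.Gamma_eq_integral hp',
    ofReal_integral_eq_lintegral_ofReal (Real.GammaIntegral_convergent hp')]
  · refine lintegral_congr fun x => ?_
    rw [← ENNReal.ofReal_mul (by positivity)]
    simp
  · filter_upwards [ae_restrict_mem measurableSet_Ioi] with x hx
    have : (0 : ℝ) < x := hx
    simp only [Pi.zero_apply]
    positivity

/-- Two probability measures on `(0,∞)` with the same tails are equal. -/
lemma MeasureTheory.Measure.ext_of_Ioi_of_nonneg (ν₁ ν₂ : Measure ℝ) [IsProbabilityMeasure ν₁]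
    [IsProbabilityMeasure ν₂] (h1 : ν₁ (Ioi 0) = 1)
    (h : ∀ a, 0 ≤ a → ν₁ (Ioi a) = ν₂ (Ioi a)) : ν₁ = ν₂ := by
  refine Measure.ext_of_Iic _ _ fun a => ?_
  rw [← compl_Ioi, prob_compl_eq_one_sub measurableSet_Ioi,
    prob_compl_eq_one_sub measurableSet_Ioi]
  rcases le_total 0 a with ha | ha
  · rw [h a ha]
  · have key (ν : Measure ℝ) [IsProbabilityMeasure ν] (hν : ν (Ioi 0) = 1) : ν (Ioi a) = 1 :=
      le_antisymm prob_le_one (hν ▸ measure_mono (Ioi_subset_Ioi ha))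
    rw [key ν₁ h1, key ν₂ (h 0 le_rfl ▸ h1)]

lemma integrable_exp_neg_mul (ν : Measure ℝ) [IsProbabilityMeasure ν] (hν : ∀ᵐ x ∂ν, 0 < x)
    {l : ℝ} (hl : 0 ≤ l) : Integrable (fun x => Real.exp (-l * x)) ν := by
  refine Integrable.of_bound (by fun_prop) 1 ?_
  filter_upwards [hν] with x hx
  rw [Real.norm_eq_abs, Real.abs_exp, Real.exp_le_one_iff]
  nlinarith

/-- The Laplace transform of a law `ν` on `(0,∞)` is the tail of the quotient of an independent
standard exponential variable by a variable of law `ν`. -/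
lemma map_div_prod_expLaw_Ioi (ν : Measure ℝ) [IsProbabilityMeasure ν]
    (hν : ∀ᵐ x ∂ν, 0 < x) {a : ℝ} (ha : 0 ≤ a) :
    (ν.prod (expLaw 1)).map (fun z => z.2 / z.1) (Ioi a) =
      ENNReal.ofReal (∫ x, Real.exp (-a * x) ∂ν) := by
  have := isProbabilityMeasure_expLaw one_pos
  have hm : Measurable fun z : ℝ × ℝ => z.2 / z.1 := by fun_prop
  rw [Measure.map_apply hm measurableSet_Ioi, Measure.prod_apply (hm measurableSet_Ioi),
    ofReal_integral_eq_lintegral_ofReal (integrable_exp_neg_mul ν hν ha)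
      (ae_of_all _ fun x => by positivity)]
  refine lintegral_congr_ae ?_
  filter_upwards [hν] with x hx
  have hset : Prod.mk x ⁻¹' ((fun z : ℝ × ℝ => z.2 / z.1) ⁻¹' Ioi a) = Ioi (a * x) := by
    ext y
    simp [lt_div_iff₀ hx]
  rw [hset, expLaw_Ioi one_pos (by positivity)]
  ring_nf

lemma lintegral_rpow_map_div_prod_expLaw (ν : Measure ℝ) [IsProbabilityMeasure ν]
    (hν : ∀ᵐ x ∂ν, 0 < x) {p : ℝ} (hp : -1 < p) :
    ∫⁻ z, ENNReal.ofReal (z ^ p) ∂((ν.prod (expLaw 1)).map fun z => z.2 / z.1) =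
      (∫⁻ x, ENNReal.ofReal (x ^ (-p)) ∂ν) * ENNReal.ofReal (Real.Gamma (p + 1)) := by
  have := isProbabilityMeasure_expLaw one_pos
  rw [lintegral_map (by fun_prop) (by fun_prop), lintegral_prod _ (by fun_prop),
    ← lintegral_rpow_expLaw_one hp, ← lintegral_mul_const _ (by fun_prop)]
  refine lintegral_congr_ae ?_
  filter_upwards [hν] with x hx
  rw [← lintegral_const_mul _ (by fun_prop)]
  refine lintegral_congr_ae ?_
  filter_upwards [ae_pos_expLaw 1] with y hy
  rw [← ENNReal.ofReal_mul (by positivity), Real.div_rpow hy.le hx.le, Real.rpow_neg hx.le]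
  congr 1
  field_simp

lemma continuousOn_laplace (ν : Measure ℝ) [IsProbabilityMeasure ν] (hν : ∀ᵐ x ∂ν, 0 < x) :
    ContinuousOn (fun l : ℝ => ∫ x, Real.exp (-l * x) ∂ν) (Ici 0) := by
  refine continuousOn_of_dominated (bound := fun _ => 1) (fun l _ => by fun_prop) ?_
    (integrable_const _) (ae_of_all _ fun x => by fun_prop)
  intro l hl
  filter_upwards [hν] with x hx
  rw [Real.norm_eq_abs, Real.abs_exp, Real.exp_le_one_iff]
  have : 0 ≤ l := hl
  nlinarith

lemma antitoneOn_laplace (ν : Measure ℝ) [IsProbabilityMeasure ν] (hν : ∀ᵐ x ∂ν, 0 < x) :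
    AntitoneOn (fun l : ℝ => ∫ x, Real.exp (-l * x) ∂ν) (Ici 0) := by
  intro a ha b hb hab
  refine integral_mono_ae (integrable_exp_neg_mul ν hν hb) (integrable_exp_neg_mul ν hν ha) ?_
  filter_upwards [hν] with x hx
  refine Real.exp_le_exp.2 ?_
  nlinarith

/-- Let `φ` be a Bernstein function with `φ(0) = 0`, `φ(∞) = ∞`, inverse `Ψ`,
and let `(μ_t)_{t>0}` be the marginal laws of the associated subordinator, i.e.
`∫ e^{−λx} μ_t(dx) = e^{−tφ(λ)}`. Then for every `t > 0` and every `p > −1` such that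
`∫₀^∞ e^{−tx} Ψ(x)^p dx < ∞`, one has
`E[ξ_t^{−p}] = ∫ x^{−p} μ_t(dx) = (t/Γ(p+1)) ∫₀^∞ e^{−tx} Ψ(x)^p dx`. -/
theorem stmt_4 (φ Ψ : ℝ → ℝ) (hφ : IsBernsteinFn φ) (h0 : φ 0 = 0)
    (hinf : Tendsto φ atTop atTop) (hinv : Set.InvOn Ψ φ (Ici 0) (Ici 0))
    (μ : ℝ → Measure ℝ) (hprob : ∀ t : ℝ, 0 < t → IsProbabilityMeasure (μ t))
    (hsupp : ∀ t : ℝ, 0 < t → μ t {x | x ≤ 0} = 0)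
    (hlaplace : ∀ t : ℝ, 0 < t → ∀ l : ℝ, 0 ≤ l →
      ∫ x, Real.exp (-l * x) ∂(μ t) = Real.exp (-t * φ l)) :
    ∀ t : ℝ, 0 < t → ∀ p : ℝ, -1 < p →
      IntegrableOn (fun x => Real.exp (-t * x) * Ψ x ^ p) (Ioi 0) →
      ∫⁻ x, ENNReal.ofReal (x ^ (-p)) ∂(μ t) =
        ENNReal.ofReal
          (t / Real.Gamma (p + 1) * ∫ x in Ioi (0 : ℝ), Real.exp (-t * x) * Ψ x ^ p) := by
  intro t ht p hp hI
  have := hprob t ht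
  have hν : ∀ᵐ x ∂(μ t), 0 < x := by
    have h := hsupp t ht
    simpa [ae_iff, not_lt] using h
  have hL := hlaplace t ht
  have hφL : ∀ l ∈ Ici (0 : ℝ), φ l = -Real.log (∫ x, Real.exp (-l * x) ∂(μ t)) / t := by
    intro l hl
    rw [hL l hl, Real.log_exp]
    field_simp
  have hcont : ContinuousOn φ (Ici 0) := by
    refine ContinuousOn.congr ?_ hφL
    refine (((continuousOn_laplace (μ t) hν).log fun l hl => ?_).neg).div_const t
    rw [hL l hl]
    exact (Real.exp_pos _).ne'
  have hmono : MonotoneOn φ (Ici 0) := by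
    intro a ha b hb hab
    have h := antitoneOn_laplace (μ t) hν ha hb hab
    simp only [hL a ha, hL b hb, Real.exp_le_exp] at h
    nlinarith
  have hstrict : StrictMonoOn φ (Ici 0) := hmono.strictMonoOn_of_injOn hinv.1.injOn
  have hsurj : ∀ y, 0 ≤ y → ∃ x, 0 ≤ x ∧ φ x = y := by
    intro y hy
    obtain ⟨b, hb, hby⟩ := ((eventually_ge_atTop 0).and (hinf.eventually_ge_atTop y)).exists
    obtain ⟨x, hx, hxy⟩ := intermediate_value_Icc hb (hcont.mono Icc_subset_Ici_self)
      (show y ∈ Icc (φ 0) (φ b) from ⟨h0.trans_le hy, hby⟩)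
    exact ⟨x, hx.1, hxy⟩
  have hΨlt : ∀ a, 0 ≤ a → ∀ y, 0 ≤ y → (a < Ψ y ↔ φ a < y) := by
    intro a ha y hy
    obtain ⟨x, hx, rfl⟩ := hsurj y hy
    rw [hinv.1 hx, hstrict.lt_iff_lt ha hx]
  have hΨnn : ∀ y, 0 ≤ y → 0 ≤ Ψ y := by
    intro y hy
    obtain ⟨x, hx, rfl⟩ := hsurj y hy
    rwa [hinv.1 hx]
  have hΨmono : MonotoneOn Ψ (Ioi 0) := by
    intro a ha b hb hab
    by_contra! h
    have hb' := hΨnn b (le_of_lt hb)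
    have h1 := (hΨlt (Ψ b) hb' a (le_of_lt ha)).1 h
    rw [hinv.2 (le_of_lt hb : (0 : ℝ) ≤ b)] at h1
    exact absurd h1 (not_lt.2 hab)
  have hΨm : AEMeasurable Ψ (volume.restrict (Ioi 0)) :=
    aemeasurable_restrict_of_monotoneOn measurableSet_Ioi hΨmono
  have hΨm' : AEMeasurable Ψ (expLaw t) :=
    hΨm.mono_ac (withDensity_absolutelyContinuous _ _)
  have := isProbabilityMeasure_expLaw ht
  have := isProbabilityMeasure_expLaw one_pos
  have := Measure.isProbabilityMeasure_map hΨm'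
  have := Measure.isProbabilityMeasure_map (μ := (μ t).prod (expLaw 1))
    (f := fun z : ℝ × ℝ => z.2 / z.1) (by fun_prop)
  have htail : ∀ a, 0 ≤ a → (expLaw t).map Ψ (Ioi a) =
      ENNReal.ofReal (Real.exp (-t * φ a)) := by
    intro a ha
    have hφa : 0 ≤ φ a := h0 ▸ hmono (mem_Ici.2 le_rfl) (mem_Ici.2 ha) ha
    rw [Measure.map_apply_of_aemeasurable hΨm' measurableSet_Ioi, ← expLaw_Ioi ht hφa]
    refine measure_congr ?_
    filter_upwards [ae_pos_expLaw t] with y hy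
    exact propext (hΨlt a ha y hy.le)
  have hlaw : (expLaw t).map Ψ = ((μ t).prod (expLaw 1)).map fun z => z.2 / z.1 := by
    refine Measure.ext_of_Ioi_of_nonneg _ _ (by simp [htail 0 le_rfl, h0]) fun a ha => ?_
    rw [htail a ha, map_div_prod_expLaw_Ioi (μ t) hν ha, hL a ha]
  have hΓ : 0 < Real.Gamma (p + 1) := Real.Gamma_pos_of_pos (by linarith)
  have hmom := lintegral_rpow_map_div_prod_expLaw (μ t) hν hp
  rw [← hlaw, lintegral_map' (by fun_prop) hΨm', lintegral_expLaw t (by fun_prop)] at hmom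
  have h_value : ∫⁻ x in Ioi 0, ENNReal.ofReal (t * Real.exp (-t * x)) * ENNReal.ofReal (Ψ x ^ p) =
      ENNReal.ofReal (t * ∫ x in Ioi (0 : ℝ), Real.exp (-t * x) * Ψ x ^ p) := by
    rw [← integral_const_mul, ofReal_integral_eq_lintegral_ofReal (hI.const_mul t)]
    · refine lintegral_congr fun x => ?_
      rw [← ENNReal.ofReal_mul (by positivity), mul_assoc]
    · filter_upwards [ae_restrict_mem measurableSet_Ioi] with x hx
      have := Real.rpow_nonneg (hΨnn x (le_of_lt hx)) p
      simp only [Pi.zero_apply]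
      positivity
  rw [h_value] at hmom
  rw [div_mul_eq_mul_div, ENNReal.ofReal_div_of_pos hΓ, hmom,
    ENNReal.mul_div_cancel_right (by simpa using hΓ) ENNReal.ofReal_ne_top]
end

section
/- Let φ be a non-trivial (non-affine) Bernstein function with φ(0) = 0 and φ(∞) = ∞, let Ψ be its inverse, let (μ_t)_{t>0} be the family of marginal laws of the subordinator associated with φ, and let p ∈ (−1, 0). Then x ↦ e^{−t x} Ψ(x)^p is integrable in a neighborhood of ∞ for every t > 0, and the following are equivalent: (i) Ψ^p is integrable in a neighborhood of 0; (ii) t ↦ E[ξ_t^{−p}] = ∫ x^{−p} μ_t(dx) is a Bernstein function on (0,∞). In that case, for all t > 0, E[ξ_t^{−p}] = (1/Γ(p+1)) ∫₀^∞ (1 − e^{−t x}) (−(Ψ^p)'(x)) dx. -/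
open MeasureTheory Set Filter

open ProbabilityTheory in
/-- Mixtures of `t ↦ 1 - exp (-t g)` with `g ≥ 0` are Bernstein functions. -/
theorem IsBernsteinFn.of_eq_integral_one_sub_exp {α : Type*} [MeasurableSpace α]
    {ν : Measure α} {g : α → ℝ} (hg : AEMeasurable g ν) (hg0 : 0 ≤ᵐ[ν] g)
    (hint : ∀ t : ℝ, 0 < t → Integrable (fun a => 1 - Real.exp (-t * g a)) ν)
    {F : ℝ → ℝ} (hF : ∀ t : ℝ, 0 < t → F t = ∫ a, (1 - Real.exp (-t * g a)) ∂ν) :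
    IsBernsteinFn F := by
  have hgexp : ∀ t : ℝ, 0 < t → Integrable (fun a => g a * Real.exp (-t * g a)) ν := by
    intro t ht
    refine ((hint t ht).const_mul t⁻¹).mono'
      (hg.mul (Real.measurable_exp.comp_aemeasurable
        (hg.const_mul (-t)))).aestronglyMeasurable ?_
    filter_upwards [hg0] with a (ha : 0 ≤ g a)
    rw [Real.norm_of_nonneg (by positivity), inv_mul_eq_div, le_div_iff₀ ht]
    have h1 := Real.add_one_le_exp (t * g a)
    have h2 : Real.exp (t * g a) * Real.exp (-t * g a) = 1 := by
      rw [← Real.exp_add]; simp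
    nlinarith [Real.exp_pos (-t * g a)]
  have hderiv : ∀ t : ℝ, 0 < t →
      HasDerivAt F (∫ a, g a * Real.exp (-t * g a) ∂ν) t := by
    intro t ht
    have key := (hasDerivAt_integral_of_dominated_loc_of_deriv_le
      (F := fun s a => 1 - Real.exp (-s * g a)) (F' := fun s a => g a * Real.exp (-s * g a))
      (bound := fun a => g a * Real.exp (-(t / 2) * g a)) (x₀ := t)
      (Ioi_mem_nhds (half_lt_self ht))
      (by filter_upwards [Ioi_mem_nhds ht] with s hs using (hint s hs).aestronglyMeasurable)
      (hint t ht) (hgexp t ht).aestronglyMeasurable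
      (by
        filter_upwards [hg0] with a (ha : 0 ≤ g a) s (hs : t / 2 < s)
        rw [Real.norm_of_nonneg (by positivity)]
        gcongr)
      (hgexp _ (half_pos ht))
      (by
        refine Eventually.of_forall fun a s _ => ?_
        have h := (((hasDerivAt_neg s).mul_const (g a)).exp).const_sub 1
        convert h using 1
        ring)).2
    refine key.congr_of_eventuallyEq ?_
    filter_upwards [Ioi_mem_nhds ht] with s hs using hF s hs
  set κ : Measure α := ν.withDensity fun a => ENNReal.ofReal (g a) with hκ
  have hdens : AEMeasurable (fun a => ENNReal.ofReal (g a)) ν := hg.ennreal_ofReal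
  have hmgf : ∀ t : ℝ, 0 < t → deriv F t = mgf (fun a => -g a) κ t := by
    intro t ht
    rw [(hderiv t ht).deriv, mgf, hκ,
      integral_withDensity_eq_integral_toReal_smul₀ hdens (by simp)]
    refine integral_congr_ae ?_
    filter_upwards [hg0] with a (ha : 0 ≤ g a)
    simp [ENNReal.toReal_ofReal ha]
  have hsub : Ioi (0 : ℝ) ⊆ interior (integrableExpSet (fun a => -g a) κ) := by
    refine interior_maximal (fun t ht => ?_) isOpen_Ioi
    rw [integrableExpSet, mem_ofPred_eq, hκ,
      integrable_withDensity_iff_integrable_smul₀' hdens (by simp)]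
    refine (hgexp t ht).congr ?_
    filter_upwards [hg0] with a (ha : 0 ≤ g a)
    simp [ENNReal.toReal_ofReal ha]
  have hκ0 : ∀ᵐ a ∂κ, 0 ≤ g a := (withDensity_absolutelyContinuous _ _).ae_le hg0
  refine ⟨fun t ht => ?_, ?_, fun n hn t ht => ?_⟩
  · rw [hF t ht]
    refine integral_nonneg_of_ae ?_
    filter_upwards [hg0] with a (ha : 0 ≤ g a)
    have : Real.exp (-t * g a) ≤ 1 := Real.exp_le_one_iff.2 (by nlinarith)
    simpa using this
  · rw [contDiffOn_infty_iff_deriv_of_isOpen isOpen_Ioi]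
    refine ⟨fun t ht => (hderiv t ht).differentiableAt.differentiableWithinAt, ?_⟩
    exact ((analyticOn_mgf.mono hsub).contDiffOn (uniqueDiffOn_Ioi 0)).congr hmgf
  · obtain ⟨m, rfl⟩ := Nat.exists_eq_add_of_le' hn
    have hev : deriv F =ᶠ[nhds t] mgf (fun a => -g a) κ := by
      filter_upwards [Ioi_mem_nhds ht] with s hs using hmgf s hs
    rw [iteratedDeriv_succ', hev.iteratedDeriv_eq, iteratedDeriv_mgf (hsub ht),
      ← integral_const_mul, Nat.add_sub_cancel]
    refine integral_nonneg_of_ae ?_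
    filter_upwards [hκ0] with a ha
    simp only [Pi.zero_apply]
    rw [← mul_assoc, ← mul_pow]
    simp only [neg_mul_neg, one_mul]
    positivity

/-- The measure `-p / Γ(p + 1) * l ^ (p - 1) dl` on `(0, ∞)`. -/
noncomputable def powerMeasure (p : ℝ) : Measure ℝ :=
  (volume.restrict (Ioi 0)).withDensity fun l =>
    ENNReal.ofReal (-p / Real.Gamma (p + 1) * l ^ (p - 1))

theorem powerMeasure_absolutelyContinuous (p : ℝ) :
    powerMeasure p ≪ volume.restrict (Ioi 0) :=
  withDensity_absolutelyContinuous _ _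

theorem ae_powerMeasure_pos (p : ℝ) : ∀ᵐ l ∂powerMeasure p, 0 < l :=
  (powerMeasure_absolutelyContinuous p).ae_le (ae_restrict_mem measurableSet_Ioi)

instance (p : ℝ) : SFinite (powerMeasure p) := by
  unfold powerMeasure; infer_instance

theorem powerMeasure_Ioi {p : ℝ} (hp : p ∈ Ioo (-1 : ℝ) 0) {b : ℝ} (hb : 0 < b) :
    powerMeasure p (Ioi b) = ENNReal.ofReal (b ^ p / Real.Gamma (p + 1)) := by
  have hp1 : p - 1 < -1 := by linarith [hp.2]
  have hG : 0 < Real.Gamma (p + 1) := Real.Gamma_pos_of_pos (by linarith [hp.1])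
  rw [powerMeasure, withDensity_apply _ measurableSet_Ioi,
    Measure.restrict_restrict measurableSet_Ioi,
    inter_eq_left.2 (Ioi_subset_Ioi hb.le), ← ofReal_integral_eq_lintegral_ofReal
      ((integrableOn_Ioi_rpow_of_lt hp1 hb).const_mul _), integral_const_mul,
    integral_Ioi_rpow_of_lt hp1 hb]
  · congr 1
    have := hp.2.ne
    rw [sub_add_cancel]
    field_simp
  · filter_upwards [ae_restrict_mem measurableSet_Ioi] with l (hl : b < l)
    have : 0 < l := hb.trans hl
    have := hp.2
    have : 0 ≤ -p := by linarith
    simp only [Pi.zero_apply]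
    positivity

theorem integral_exp_neg_zero (x : ℝ) : ∫ s in (0 : ℝ)..x, Real.exp (-s) = 1 - Real.exp (-x) := by
  simp

/-- Subordination formula for the fractional power `x ^ (-p)`. -/
theorem lintegral_one_sub_exp_powerMeasure {p : ℝ} (hp : p ∈ Ioo (-1 : ℝ) 0) {x : ℝ}
    (hx : 0 < x) :
    ∫⁻ l, ENNReal.ofReal (1 - Real.exp (-l * x)) ∂powerMeasure p = ENNReal.ofReal (x ^ (-p)) := by
  have hp1 : 0 < p + 1 := by linarith [hp.1]
  have hG : 0 < Real.Gamma (p + 1) := Real.Gamma_pos_of_pos hp1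
  have hlayer := lintegral_comp_eq_lintegral_meas_lt_mul (f := fun l => l * x)
    (g := fun s => Real.exp (-s)) (powerMeasure p)
    (by filter_upwards [ae_powerMeasure_pos p] with l hl using (mul_pos hl hx).le)
    (by fun_prop)
    (fun t _ => (by fun_prop : Continuous fun s : ℝ => Real.exp (-s)).intervalIntegrable _ _)
    (Eventually.of_forall fun s => by positivity)
  simp only [integral_exp_neg_zero] at hlayer
  simp only [neg_mul]
  rw [hlayer]
  calc ∫⁻ t in Ioi 0, powerMeasure p {l | t < l * x} * ENNReal.ofReal (Real.exp (-t))
      = ∫⁻ t in Ioi 0, ENNReal.ofReal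
          (x ^ (-p) / Real.Gamma (p + 1) * (Real.exp (-t) * t ^ (p + 1 - 1))) := by
        refine setLIntegral_congr_fun measurableSet_Ioi fun t (ht : 0 < t) => ?_
        have hset : {l | t < l * x} = Ioi (t / x) := by
          ext l; simp [div_lt_iff₀ hx]
        simp only [hset]
        rw [powerMeasure_Ioi hp (by positivity), ← ENNReal.ofReal_mul (by positivity),
          Real.div_rpow ht.le hx.le, Real.rpow_neg hx.le, add_sub_cancel_right]
        congr 1
        field_simp
    _ = ENNReal.ofReal (x ^ (-p)) := by
        rw [← ofReal_integral_eq_lintegral_ofReal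
          ((Real.GammaIntegral_convergent hp1).const_mul _), integral_const_mul,
          ← Real.Gamma_eq_integral hp1, div_mul_cancel₀ _ hG.ne']
        filter_upwards [ae_restrict_mem measurableSet_Ioi] with t (ht : 0 < t)
        simp only [Pi.zero_apply]
        positivity

/-- Fractional moments in terms of the Laplace exponent. -/
theorem lintegral_rpow_eq_lintegral_powerMeasure {p : ℝ} (hp : p ∈ Ioo (-1 : ℝ) 0)
    {m : Measure ℝ} [IsProbabilityMeasure m] (hm : m {x | x ≤ 0} = 0) {L : ℝ → ℝ}
    (hL : ∀ l : ℝ, 0 < l → ∫ x, Real.exp (-l * x) ∂m = L l) :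
    ∫⁻ x, ENNReal.ofReal (x ^ (-p)) ∂m = ∫⁻ l, ENNReal.ofReal (1 - L l) ∂powerMeasure p := by
  have hpos : ∀ᵐ x ∂m, 0 < x := by
    rw [ae_iff]; simpa using hm
  calc ∫⁻ x, ENNReal.ofReal (x ^ (-p)) ∂m
      = ∫⁻ x, ∫⁻ l, ENNReal.ofReal (1 - Real.exp (-l * x)) ∂powerMeasure p ∂m := by
        refine lintegral_congr_ae ?_
        filter_upwards [hpos] with x hx using (lintegral_one_sub_exp_powerMeasure hp hx).symm
    _ = ∫⁻ l, ∫⁻ x, ENNReal.ofReal (1 - Real.exp (-l * x)) ∂m ∂powerMeasure p :=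
        lintegral_lintegral_swap (by fun_prop)
    _ = ∫⁻ l, ENNReal.ofReal (1 - L l) ∂powerMeasure p := by
        refine lintegral_congr_ae ?_
        filter_upwards [ae_powerMeasure_pos p] with l hl
        have hle : ∀ᵐ x ∂m, Real.exp (-l * x) ≤ 1 := by
          filter_upwards [hpos] with x hx
          exact Real.exp_le_one_iff.2 (by nlinarith)
        have hint : Integrable (fun x => Real.exp (-l * x)) m := by
          refine (integrable_const (1 : ℝ)).mono' (by fun_prop) ?_
          filter_upwards [hle] with x hx
          rwa [Real.norm_of_nonneg (Real.exp_pos _).le]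
        rw [← ofReal_integral_eq_lintegral_ofReal
            (f := fun x => 1 - Real.exp (-l * x)) ((integrable_const 1).sub hint),
          integral_sub (integrable_const 1) hint, hL l hl]
        · simp
        · filter_upwards [hle] with x hx
          simpa using hx

theorem min_le_mul_one_sub_exp {s : ℝ} (hs : 0 ≤ s) : min s 1 ≤ 2 * (1 - Real.exp (-s)) := by
  have h1 := Real.add_one_le_exp s
  have h2 : Real.exp s * Real.exp (-s) = 1 := by rw [← Real.exp_add]; simp
  have h3 := Real.exp_pos (-s)
  rcases le_total s 1 with h | h
  · rw [min_eq_left h]; nlinarith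
  · rw [min_eq_right h]; nlinarith

theorem one_sub_exp_le_mul_min {t s : ℝ} (ht : 0 < t) (hs : 0 ≤ s) :
    1 - Real.exp (-t * s) ≤ (t + 1) * min s 1 := by
  have h1 := Real.add_one_le_exp (-t * s)
  have h3 := Real.exp_pos (-t * s)
  rcases le_total s 1 with h | h
  · rw [min_eq_left h]; nlinarith
  · rw [min_eq_right h]; nlinarith

section LaplaceExponent

variable {φ Ψ : ℝ → ℝ}

theorem IsBernsteinFn.differentiableAt (hφ : IsBernsteinFn φ) {x : ℝ} (hx : 0 < x) :
    DifferentiableAt ℝ φ x :=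
  (hφ.2.1.differentiableOn (by simp)).differentiableAt (Ioi_mem_nhds hx)

theorem IsBernsteinFn.deriv_nonneg (hφ : IsBernsteinFn φ) {x : ℝ} (hx : 0 < x) :
    0 ≤ deriv φ x := by
  simpa using hφ.2.2 1 le_rfl x hx

theorem IsBernsteinFn.antitoneOn_deriv (hφ : IsBernsteinFn φ) :
    AntitoneOn (deriv φ) (Ioi 0) := by
  have hd : DifferentiableOn ℝ (deriv φ) (Ioi 0) :=
    ((contDiffOn_infty_iff_deriv_of_isOpen isOpen_Ioi).1 hφ.2.1).2.differentiableOn (by simp)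
  refine antitoneOn_of_deriv_nonpos (convex_Ioi 0) hd.continuousOn (by simpa using hd) ?_
  intro x hx
  rw [interior_Ioi] at hx
  have := hφ.2.2 2 (by norm_num) x hx
  simpa [iteratedDeriv_succ] using this

theorem IsBernsteinFn.strictMonoOn (hφ : IsBernsteinFn φ) (hcont : ContinuousOn φ (Ici 0))
    (hinj : InjOn φ (Ici 0)) : StrictMonoOn φ (Ici 0) := by
  have hmono : MonotoneOn φ (Ici 0) := by
    refine monotoneOn_of_deriv_nonneg (convex_Ici 0) hcont ?_ ?_
    · rw [interior_Ici]
      exact fun x hx => (hφ.differentiableAt hx).differentiableWithinAt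
    · rw [interior_Ici]
      exact fun x hx => hφ.deriv_nonneg hx
  exact fun x hx y hy hxy =>
    (hmono hx hy hxy.le).lt_of_ne fun h => hxy.ne (hinj hx hy h)

theorem IsBernsteinFn.deriv_pos (hφ : IsBernsteinFn φ) (hmono : StrictMonoOn φ (Ici 0))
    {x : ℝ} (hx : 0 < x) : 0 < deriv φ x := by
  refine (hφ.deriv_nonneg hx).lt_of_ne fun h => ?_
  have hd : ∀ y ∈ Ici x, DifferentiableAt ℝ φ y := fun y hy =>
    hφ.differentiableAt (hx.trans_le hy)
  have hanti : AntitoneOn φ (Ici x) := by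
    refine antitoneOn_of_deriv_nonpos (convex_Ici x)
      (fun y hy => (hd y hy).continuousAt.continuousWithinAt)
      (fun y hy => (hd y (interior_subset hy)).differentiableWithinAt) fun y hy => ?_
    have hy : x ≤ y := interior_subset hy
    exact (hφ.antitoneOn_deriv hx (hx.trans_le hy) hy).trans h.ge
  have h1 := hanti (mem_Ici.2 le_rfl) (mem_Ici.2 (by linarith : x ≤ x + 1)) (by linarith)
  have h2 := hmono (mem_Ici.2 hx.le) (mem_Ici.2 (by linarith : 0 ≤ x + 1)) (by linarith)
  linarith

/-- A Laplace exponent is continuous on `[0, ∞)`. -/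
theorem continuousOn_laplaceExponent {m : Measure ℝ} [IsProbabilityMeasure m]
    (hm : m {x | x ≤ 0} = 0)
    (hL : ∀ l : ℝ, 0 ≤ l → ∫ x, Real.exp (-l * x) ∂m = Real.exp (-φ l)) :
    ContinuousOn φ (Ici 0) := by
  have hpos : ∀ᵐ x ∂m, 0 < x := by
    rw [ae_iff]; simpa using hm
  have hc : ContinuousOn (fun l : ℝ => ∫ x, Real.exp (-l * x) ∂m) (Ici 0) := by
    refine continuousOn_of_dominated (bound := fun _ => 1) (fun l _ => by fun_prop)
      (fun l hl => ?_) (integrable_const _) (Eventually.of_forall fun x => by fun_prop)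
    filter_upwards [hpos] with x hx
    rw [Real.norm_of_nonneg (Real.exp_pos _).le]
    have hl : 0 ≤ l := hl
    exact Real.exp_le_one_iff.2 (by nlinarith)
  refine (hc.log fun l hl => ?_).neg.congr fun l hl => ?_
  · rw [hL l hl]; exact (Real.exp_pos _).ne'
  · simp only [Pi.neg_apply, hL l hl, Real.log_exp, neg_neg]

theorem surjOn_Ici_of_tendsto (hcont : ContinuousOn φ (Ici 0)) (h0 : φ 0 = 0)
    (hinf : Tendsto φ atTop atTop) : SurjOn φ (Ici 0) (Ici 0) := by
  intro y hy
  obtain ⟨b, hb, hb0⟩ := ((hinf.eventually_ge_atTop y).and (eventually_ge_atTop 0)).exists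
  obtain ⟨x, hx, hxy⟩ := intermediate_value_Icc hb0 (hcont.mono Icc_subset_Ici_self)
    (show y ∈ Icc (φ 0) (φ b) from ⟨h0.trans_le hy, hb⟩)
  exact ⟨x, hx.1, hxy⟩

theorem StrictMonoOn.image_Ioi_eq (hmono : StrictMonoOn φ (Ici 0))
    (hsurj : SurjOn φ (Ici 0) (Ici 0)) (h0 : φ 0 = 0) : φ '' Ioi 0 = Ioi 0 := by
  ext y
  constructor
  · rintro ⟨x, hx, rfl⟩
    exact h0.symm.trans_lt (hmono self_mem_Ici (mem_Ici.2 (le_of_lt hx)) hx)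
  · intro hy
    obtain ⟨x, hx, rfl⟩ := hsurj (mem_Ici.2 (le_of_lt hy))
    refine ⟨x, mem_Ioi.2 (lt_of_le_of_ne hx ?_), rfl⟩
    rintro rfl
    simp [h0] at hy

theorem StrictMonoOn.inverse_pos (hmono : StrictMonoOn φ (Ici 0))
    (hsurj : SurjOn φ (Ici 0) (Ici 0)) (h0 : φ 0 = 0) (hleft : LeftInvOn Ψ φ (Ici 0))
    {y : ℝ} (hy : 0 < y) : 0 < Ψ y := by
  obtain ⟨x, hx, rfl⟩ : y ∈ φ '' Ioi 0 := by rwa [hmono.image_Ioi_eq hsurj h0]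
  rwa [hleft (mem_Ici.2 (le_of_lt hx))]

theorem StrictMonoOn.antitoneOn_inverse_rpow (hmono : StrictMonoOn φ (Ici 0))
    (hsurj : SurjOn φ (Ici 0) (Ici 0)) (h0 : φ 0 = 0) (hleft : LeftInvOn Ψ φ (Ici 0))
    {p : ℝ} (hp : p ≤ 0) : AntitoneOn (fun y => Ψ y ^ p) (Ioi 0) := by
  have him := hmono.image_Ioi_eq hsurj h0
  intro y hy z hz hyz
  obtain ⟨a, ha, rfl⟩ := him.ge hy
  obtain ⟨b, hb, rfl⟩ := him.ge hz
  simp only [hleft (mem_Ici.2 (le_of_lt ha)), hleft (mem_Ici.2 (le_of_lt hb))]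
  exact Real.rpow_le_rpow_of_nonpos ha
    ((hmono.le_iff_le (mem_Ici.2 (le_of_lt ha)) (mem_Ici.2 (le_of_lt hb))).1 hyz) hp

/-- Layer-cake representation of the integral of `Ψ ^ p` near the origin. -/
theorem lintegral_inverse_rpow {p : ℝ} (hp : p ∈ Ioo (-1 : ℝ) 0)
    (hcont : ContinuousOn φ (Ici 0)) (hmono : StrictMonoOn φ (Ici 0))
    (hsurj : SurjOn φ (Ici 0) (Ici 0)) (h0 : φ 0 = 0) (hleft : LeftInvOn Ψ φ (Ici 0)) :
    ∫⁻ l, ENNReal.ofReal (min (φ l) 1) ∂powerMeasure p =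
      ENNReal.ofReal (Real.Gamma (p + 1))⁻¹ * ∫⁻ x in Ioo 0 1, ENNReal.ofReal (Ψ x ^ p) := by
  have hG : 0 < Real.Gamma (p + 1) := Real.Gamma_pos_of_pos (by linarith [hp.1])
  have hmeas : AEMeasurable φ (powerMeasure p) :=
    ((hcont.mono Ioi_subset_Ici_self).aemeasurable measurableSet_Ioi).mono_ac
      (powerMeasure_absolutelyContinuous p)
  have hnonneg : ∀ᵐ l ∂powerMeasure p, 0 ≤ φ l := by
    filter_upwards [ae_powerMeasure_pos p] with l hl
    exact h0.symm.trans_le (hmono self_mem_Ici (mem_Ici.2 hl.le) hl).le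
  have hlayer := lintegral_eq_lintegral_meas_lt (f := fun l => min (φ l) 1) (powerMeasure p)
    (by filter_upwards [hnonneg] with l hl using le_min hl zero_le_one)
    (hmeas.min aemeasurable_const)
  have htail : ∀ y ∈ Ioi (0 : ℝ), powerMeasure p {l | y < min (φ l) 1} =
      (Ioo (0 : ℝ) 1).indicator
        (fun x => ENNReal.ofReal (Real.Gamma (p + 1))⁻¹ * ENNReal.ofReal (Ψ x ^ p)) y := by
    intro y (hy : 0 < y)
    by_cases hy1 : y < 1
    · have hΨ := hmono.inverse_pos hsurj h0 hleft hy
      have hφΨ : φ (Ψ y) = y := by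
        obtain ⟨x, hx, rfl⟩ := hsurj (mem_Ici.2 hy.le)
        rw [hleft hx]
      rw [indicator_of_mem (show y ∈ Ioo (0 : ℝ) 1 from ⟨hy, hy1⟩),
        ← ENNReal.ofReal_mul (by positivity), inv_mul_eq_div, ← powerMeasure_Ioi hp hΨ]
      refine measure_congr (eventuallyEq_set.2 ?_)
      filter_upwards [ae_powerMeasure_pos p] with l hl
      have hiff := hmono.lt_iff_lt (mem_Ici.2 hΨ.le) (mem_Ici.2 hl.le)
      rw [hφΨ] at hiff
      simpa [hy1] using hiff
    · rw [indicator_of_notMem (fun h => hy1 h.2)]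
      have : {l | y < min (φ l) 1} = ∅ := by
        ext l; simp [hy1]
      rw [this, measure_empty]
  rw [hlayer, setLIntegral_congr_fun measurableSet_Ioi htail,
    setLIntegral_indicator measurableSet_Ioo, inter_eq_left.2 Ioo_subset_Ioi_self,
    lintegral_const_mul' _ _ ENNReal.ofReal_ne_top]

/-- Change of variables `x = φ l` for integrals against `-(Ψ ^ p)'`. -/
theorem integral_mul_neg_deriv_inverse_rpow {p : ℝ} (hφ : IsBernsteinFn φ)
    (hmono : StrictMonoOn φ (Ici 0)) (hsurj : SurjOn φ (Ici 0) (Ici 0)) (h0 : φ 0 = 0)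
    (hleft : LeftInvOn Ψ φ (Ici 0)) (G : ℝ → ℝ) :
    ∫ x in Ioi (0 : ℝ), G x * (-(deriv (fun y => Ψ y ^ p) x)) =
      ∫ l in Ioi (0 : ℝ), -p * l ^ (p - 1) * G (φ l) := by
  conv_lhs => rw [← hmono.image_Ioi_eq hsurj h0]
  rw [integral_image_eq_integral_abs_deriv_smul measurableSet_Ioi
    (fun x hx => (hφ.differentiableAt hx).hasDerivAt.hasDerivWithinAt)
    (hmono.injOn.mono Ioi_subset_Ici_self)]
  refine setIntegral_congr_fun measurableSet_Ioi fun l (hl : 0 < l) => ?_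
  have hpos := hφ.deriv_pos hmono hl
  have hstrict : HasStrictDerivAt φ (deriv φ l) l :=
    (hφ.2.1.contDiffAt (Ioi_mem_nhds hl)).hasStrictDerivAt (by simp)
  have hΨ : HasDerivAt Ψ (deriv φ l)⁻¹ (φ l) :=
    (hstrict.to_local_left_inverse hpos.ne' (by
      filter_upwards [Ioi_mem_nhds hl] with x hx using
        hleft (mem_Ici.2 (le_of_lt hx)))).hasDerivAt
  have hl' : Ψ (φ l) = l := hleft (mem_Ici.2 hl.le)
  have hd := hΨ.rpow_const (p := p) (Or.inl (by rw [hl']; exact hl.ne'))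
  rw [hl'] at hd
  simp only [hd.deriv, abs_of_pos hpos, smul_eq_mul]
  field_simp

end LaplaceExponent

/-- Let `φ` be a non-affine Bernstein function with `φ(0) = 0`, `φ(∞) = ∞`,
inverse `Ψ`, marginal subordinator laws `(μ_t)_{t>0}`, and let `p ∈ (−1,0)`. Then
`x ↦ e^{−tx} Ψ(x)^p` is integrable near `∞` for every `t > 0`, and the following are
equivalent: (i) `Ψ^p` is integrable near `0`; (ii) `t ↦ E[ξ_t^{−p}]` is (finite and) a
Bernstein function. In that case
`E[ξ_t^{−p}] = (1/Γ(p+1)) ∫₀^∞ (1 − e^{−tx})(−(Ψ^p)'(x)) dx` for all `t > 0`. -/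
theorem stmt_5 (φ Ψ : ℝ → ℝ) (hφ : IsBernsteinFn φ)
    (hnonaffine : ¬∃ c d : ℝ, ∀ x : ℝ, 0 ≤ x → φ x = c + d * x)
    (h0 : φ 0 = 0) (hinf : Tendsto φ atTop atTop) (hinv : Set.InvOn Ψ φ (Ici 0) (Ici 0))
    (μ : ℝ → Measure ℝ) (hprob : ∀ t : ℝ, 0 < t → IsProbabilityMeasure (μ t))
    (hsupp : ∀ t : ℝ, 0 < t → μ t {x | x ≤ 0} = 0)
    (hlaplace : ∀ t : ℝ, 0 < t → ∀ l : ℝ, 0 ≤ l →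
      ∫ x, Real.exp (-l * x) ∂(μ t) = Real.exp (-t * φ l))
    (p : ℝ) (hp : p ∈ Ioo (-1 : ℝ) 0) :
    (∀ t : ℝ, 0 < t → IntegrableOn (fun x => Real.exp (-t * x) * Ψ x ^ p) (Ioi 1)) ∧
    (IntegrableOn (fun x => Ψ x ^ p) (Ioo 0 1) ↔
      ((∀ t : ℝ, 0 < t → ∫⁻ x, ENNReal.ofReal (x ^ (-p)) ∂(μ t) ≠ ⊤) ∧
        IsBernsteinFn (fun t => (∫⁻ x, ENNReal.ofReal (x ^ (-p)) ∂(μ t)).toReal))) ∧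
    (IntegrableOn (fun x => Ψ x ^ p) (Ioo 0 1) →
      ∀ t : ℝ, 0 < t →
        (∫⁻ x, ENNReal.ofReal (x ^ (-p)) ∂(μ t)).toReal =
          (1 / Real.Gamma (p + 1)) *
            ∫ x in Ioi (0 : ℝ),
              (1 - Real.exp (-t * x)) * (-(deriv (fun y => Ψ y ^ p) x))) := by
  have hp1 : 0 < p + 1 := by linarith [hp.1]
  have hG : 0 < Real.Gamma (p + 1) := Real.Gamma_pos_of_pos hp1
  have hleft := hinv.1
  have hcont : ContinuousOn φ (Ici 0) := by
    have := hprob 1 one_pos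
    exact continuousOn_laplaceExponent (hsupp 1 one_pos) fun l hl => by
      simpa using hlaplace 1 one_pos l hl
  have hmono := hφ.strictMonoOn hcont hleft.injOn
  have hsurj := surjOn_Ici_of_tendsto hcont h0 hinf
  have hanti := hmono.antitoneOn_inverse_rpow hsurj h0 hleft hp.2.le
  have hΨpos : ∀ y : ℝ, 0 < y → 0 < Ψ y := fun y hy => hmono.inverse_pos hsurj h0 hleft hy
  have hΨmeas : AEStronglyMeasurable (fun x => Ψ x ^ p) (volume.restrict (Ioi 0)) :=
    (aemeasurable_restrict_of_antitoneOn measurableSet_Ioi hanti).aestronglyMeasurable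
  set ν := powerMeasure p with hν
  have hφmeas : AEMeasurable φ ν :=
    ((hcont.mono Ioi_subset_Ici_self).aemeasurable measurableSet_Ioi).mono_ac
      (powerMeasure_absolutelyContinuous p)
  have hφnonneg : ∀ᵐ l ∂ν, 0 ≤ φ l := by
    filter_upwards [ae_powerMeasure_pos p] with l hl using hφ.1 l hl
  have hmeas : ∀ t : ℝ, AEStronglyMeasurable (fun l => 1 - Real.exp (-t * φ l)) ν := fun t =>
    (aemeasurable_const.sub (Real.measurable_exp.comp_aemeasurable
      (hφmeas.const_mul (-t)))).aestronglyMeasurable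
  have hnonneg : ∀ t : ℝ, 0 < t → 0 ≤ᵐ[ν] fun l => 1 - Real.exp (-t * φ l) := by
    intro t ht
    filter_upwards [hφnonneg] with l hl
    simpa using mul_nonneg ht.le hl
  have hmoment : ∀ t : ℝ, 0 < t → ∫⁻ x, ENNReal.ofReal (x ^ (-p)) ∂(μ t) =
      ∫⁻ l, ENNReal.ofReal (1 - Real.exp (-t * φ l)) ∂ν := by
    intro t ht
    have := hprob t ht
    exact lintegral_rpow_eq_lintegral_powerMeasure hp (hsupp t ht)
      fun l hl => hlaplace t ht l hl.le
  have hlayer := lintegral_inverse_rpow hp hcont hmono hsurj h0 hleft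
  have hi : IntegrableOn (fun x => Ψ x ^ p) (Ioo 0 1) ↔
      ∫⁻ l, ENNReal.ofReal (min (φ l) 1) ∂ν < ⊤ := by
    have h1 : IntegrableOn (fun x => Ψ x ^ p) (Ioo 0 1) ↔
        ∫⁻ x in Ioo 0 1, ENNReal.ofReal (Ψ x ^ p) < ⊤ := by
      rw [IntegrableOn, Integrable, and_iff_right (hΨmeas.mono_set Ioo_subset_Ioi_self),
        hasFiniteIntegral_iff_ofReal]
      filter_upwards [ae_restrict_mem measurableSet_Ioo] with x hx
      exact Real.rpow_nonneg (hΨpos x hx.1).le p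
    have hc : ENNReal.ofReal (Real.Gamma (p + 1))⁻¹ ≠ 0 := by simpa using hG
    rw [h1, hlayer, ENNReal.mul_lt_top_iff]
    constructor
    · exact fun h => Or.inl ⟨ENNReal.ofReal_lt_top, h⟩
    · rintro (h | h | h)
      · exact h.2
      · exact absurd h hc
      · simp [h]
  have hint : IntegrableOn (fun x => Ψ x ^ p) (Ioo 0 1) → ∀ t : ℝ, 0 < t →
      Integrable (fun l => 1 - Real.exp (-t * φ l)) ν := by
    intro h t ht
    refine ⟨hmeas t, ?_⟩
    rw [hasFiniteIntegral_iff_ofReal (hnonneg t ht)]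
    calc ∫⁻ l, ENNReal.ofReal (1 - Real.exp (-t * φ l)) ∂ν
        ≤ ∫⁻ l, ENNReal.ofReal (t + 1) * ENNReal.ofReal (min (φ l) 1) ∂ν := by
          refine lintegral_mono_ae ?_
          filter_upwards [hφnonneg] with l hl
          rw [← ENNReal.ofReal_mul (by positivity)]
          exact ENNReal.ofReal_le_ofReal (one_sub_exp_le_mul_min ht hl)
      _ < ⊤ := by
          rw [lintegral_const_mul' _ _ ENNReal.ofReal_ne_top]
          exact ENNReal.mul_lt_top ENNReal.ofReal_lt_top (hi.1 h)
  have hreal : ∀ t : ℝ, 0 < t → (∫⁻ x, ENNReal.ofReal (x ^ (-p)) ∂(μ t)).toReal =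
      ∫ l, (1 - Real.exp (-t * φ l)) ∂ν := fun t ht => by
    rw [hmoment t ht, integral_eq_lintegral_of_nonneg_ae (hnonneg t ht) (hmeas t)]
  refine ⟨fun t ht => ?_, ⟨fun h => ⟨fun t ht => ?_, ?_⟩, fun h => ?_⟩, fun _ t ht => ?_⟩
  · refine ((exp_neg_integrableOn_Ioi 1 ht).mul_const (Ψ 1 ^ p)).mono'
      ((by fun_prop : Continuous fun x : ℝ => Real.exp (-t * x)).aestronglyMeasurable.mul
        (hΨmeas.mono_set (Ioi_subset_Ioi zero_le_one))) ?_
    filter_upwards [ae_restrict_mem measurableSet_Ioi] with x (hx : 1 < x)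
    have hx0 : 0 < x := one_pos.trans hx
    rw [Real.norm_of_nonneg
      (mul_nonneg (Real.exp_pos _).le (Real.rpow_nonneg (hΨpos x hx0).le p))]
    exact mul_le_mul_of_nonneg_left (hanti (mem_Ioi.2 one_pos) hx0 hx.le) (Real.exp_pos _).le
  · rw [hmoment t ht]
    exact ((hasFiniteIntegral_iff_ofReal (hnonneg t ht)).1 (hint h t ht).2).ne
  · exact IsBernsteinFn.of_eq_integral_one_sub_exp hφmeas hφnonneg (hint h) hreal
  · rw [hi]
    calc ∫⁻ l, ENNReal.ofReal (min (φ l) 1) ∂ν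
        ≤ ∫⁻ l, ENNReal.ofReal 2 * ENNReal.ofReal (1 - Real.exp (-1 * φ l)) ∂ν := by
          refine lintegral_mono_ae ?_
          filter_upwards [hφnonneg] with l hl
          rw [← ENNReal.ofReal_mul zero_le_two, neg_one_mul]
          exact ENNReal.ofReal_le_ofReal (min_le_mul_one_sub_exp hl)
      _ < ⊤ := by
          rw [lintegral_const_mul' _ _ ENNReal.ofReal_ne_top, ← hmoment 1 one_pos]
          exact ENNReal.mul_lt_top ENNReal.ofReal_lt_top (h.1 1 one_pos).lt_top
  · rw [hreal t ht, integral_mul_neg_deriv_inverse_rpow hφ hmono hsurj h0 hleft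
      (fun x => 1 - Real.exp (-t * x)), hν, powerMeasure,
      integral_withDensity_eq_integral_toReal_smul₀ (by fun_prop) (by simp),
      ← integral_const_mul]
    refine setIntegral_congr_fun measurableSet_Ioi fun l (hl : 0 < l) => ?_
    have hp0 : 0 ≤ -p := by linarith [hp.2]
    simp only [smul_eq_mul]
    rw [ENNReal.toReal_ofReal (by positivity)]
    ring
end
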